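/- Let f be a probability density on ℝ^I satisfying the moment condition ∫ ‖μ‖₂ f(μ) dμ < ∞ and the smoothness condition |f(z+h) − f(z)| ≤ ‖h‖₂ L_f(z) e^{τ‖h‖₂} for all z, h ∈ ℝ^I, for some τ > 0 and an envelope function L_f : ℝ^I → [0,∞) with ∫ (1 + |z_i|) L_f(z) dz < ∞ for each i = 1,…,I. Then for any δ > 0 there exist m ∈ ℤ⁺, weights ω_j ∈ [0,1] with Σ_{j=1}^m ω_j = 1, locations μ_j ∈ ℝ^I (j = 1,…,m), and a common scale σ > 0 such that ρ(f, Σ_{j=1}^m ω_j φ(·; μ_j, σ)) < δ. -/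

import Mathlib

open MeasureTheory Real

/-- The standardized univariate Gumbel density `φ(z) = exp(−z − γ − e^{−(z+γ)})`. -/
noncomputable def gumbelPdf (z : ℝ) : ℝ :=
  Real.exp (-z - Real.eulerMascheroniConstant - Real.exp (-(z + Real.eulerMascheroniConstant)))

/-- The multivariate Gumbel density `φ(z; μ, σ) = ∏_j (1/σ) φ((z_j − μ_j)/σ)`. -/
noncomputable def mGumbelPdf {J : ℕ} (μ : Fin J → ℝ) (σ : ℝ) (z : Fin J → ℝ) : ℝ :=
  ∏ j, (1 / σ) * gumbelPdf ((z j - μ j) / σ)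

/-- The Euclidean norm on `ℝ^I`. -/
noncomputable def euclNorm {I : ℕ} (z : Fin I → ℝ) : ℝ := Real.sqrt (∑ i, z i ^ 2)

open Filter Topology

/-! ### The `ℓ¹` norm and exponential envelopes -/

/-- The `ℓ¹` norm on `ℝ^I`. -/
noncomputable def l1Norm {I : ℕ} (z : Fin I → ℝ) : ℝ := ∑ i, |z i|

lemma l1Norm_nonneg {I : ℕ} (z : Fin I → ℝ) : 0 ≤ l1Norm z :=
  Finset.sum_nonneg fun _ _ => abs_nonneg _

@[fun_prop]
lemma continuous_l1Norm {I : ℕ} : Continuous (l1Norm : (Fin I → ℝ) → ℝ) := by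
  unfold l1Norm; fun_prop

lemma l1Norm_add_le {I : ℕ} (x y : Fin I → ℝ) : l1Norm (x + y) ≤ l1Norm x + l1Norm y := by
  unfold l1Norm
  rw [← Finset.sum_add_distrib]
  exact Finset.sum_le_sum fun i _ => abs_add_le _ _

lemma norm_le_l1Norm {I : ℕ} (z : Fin I → ℝ) : ‖z‖ ≤ l1Norm z := by
  refine (pi_norm_le_iff_of_nonneg (l1Norm_nonneg z)).2 fun i => ?_
  exact Finset.single_le_sum (f := fun i => |z i|) (fun _ _ => abs_nonneg _) (Finset.mem_univ i)

lemma l1Norm_le_card_mul_norm {I : ℕ} (z : Fin I → ℝ) : l1Norm z ≤ I * ‖z‖ := by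
  have : l1Norm z ≤ ∑ _i : Fin I, ‖z‖ := Finset.sum_le_sum fun i _ => norm_le_pi_norm z i
  simpa using this

lemma abs_le_euclNorm {I : ℕ} (z : Fin I → ℝ) (i : Fin I) : |z i| ≤ euclNorm z := by
  rw [← Real.sqrt_sq_eq_abs]
  exact Real.sqrt_le_sqrt
    (Finset.single_le_sum (f := fun i => z i ^ 2) (fun _ _ => sq_nonneg _) (Finset.mem_univ i))

lemma euclNorm_nonneg {I : ℕ} (z : Fin I → ℝ) : 0 ≤ euclNorm z := Real.sqrt_nonneg _

@[fun_prop]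
lemma continuous_euclNorm {I : ℕ} : Continuous (euclNorm : (Fin I → ℝ) → ℝ) := by
  unfold euclNorm; fun_prop

lemma euclNorm_le_l1Norm {I : ℕ} (z : Fin I → ℝ) : euclNorm z ≤ l1Norm z := by
  refine Real.sqrt_le_iff.2 ⟨l1Norm_nonneg z, ?_⟩
  have := Finset.sum_sq_le_sq_sum_of_nonneg (s := Finset.univ) (f := fun i => |z i|)
    (fun _ _ => abs_nonneg _)
  simpa [l1Norm] using this

lemma euclNorm_neg {I : ℕ} (z : Fin I → ℝ) : euclNorm (-z) = euclNorm z := by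
  simp [euclNorm]

lemma l1Norm_le_card_mul_euclNorm {I : ℕ} (z : Fin I → ℝ) : l1Norm z ≤ I * euclNorm z := by
  have : l1Norm z ≤ ∑ _i : Fin I, euclNorm z := Finset.sum_le_sum fun i _ => abs_le_euclNorm z i
  simpa using this

lemma integral_exp_neg_mul_abs {b : ℝ} (hb : 0 < b) : ∫ x : ℝ, Real.exp (-(b * |x|)) = 2 / b := by
  rw [integral_comp_abs (f := fun x => Real.exp (-(b * x)))]
  have := integral_exp_mul_Ioi (a := -b) (by linarith) 0
  simp only [neg_mul] at this
  rw [this]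
  simp
  ring

lemma integrable_exp_neg_mul_abs {b : ℝ} (hb : 0 < b) :
    Integrable fun x : ℝ => Real.exp (-(b * |x|)) :=
  Integrable.of_integral_ne_zero (by rw [integral_exp_neg_mul_abs hb]; positivity)

lemma exp_neg_mul_l1Norm {I : ℕ} (b : ℝ) (z : Fin I → ℝ) :
    Real.exp (-(b * l1Norm z)) = ∏ i, Real.exp (-(b * |z i|)) := by
  rw [← Real.exp_sum, l1Norm, Finset.mul_sum, Finset.sum_neg_distrib]

lemma integrable_exp_neg_mul_l1Norm {I : ℕ} {b : ℝ} (hb : 0 < b) :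
    Integrable fun z : Fin I → ℝ => Real.exp (-(b * l1Norm z)) := by
  simp_rw [exp_neg_mul_l1Norm]
  exact Integrable.fintype_prod (f := fun (_ : Fin I) x => Real.exp (-(b * |x|)))
    fun _ => integrable_exp_neg_mul_abs hb

lemma integral_exp_neg_mul_l1Norm {I : ℕ} {b : ℝ} (hb : 0 < b) :
    ∫ z : Fin I → ℝ, Real.exp (-(b * l1Norm z)) = (2 / b) ^ I := by
  simp_rw [exp_neg_mul_l1Norm]
  rw [integral_fintype_prod_volume_eq_pow (fun x : ℝ => Real.exp (-(b * |x|))),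
    integral_exp_neg_mul_abs hb, Fintype.card_fin]

lemma one_add_mul_exp_neg_le {b x : ℝ} (hb : 0 < b) (hx : 0 ≤ x) :
    (1 + x) * Real.exp (-(b * x)) ≤ (1 + 2 / b) * Real.exp (-(b / 2 * x)) := by
  have h1 : 1 + x ≤ (1 + 2 / b) * Real.exp (b / 2 * x) := by
    have h2 := Real.add_one_le_exp (b / 2 * x)
    have h3 : x = 2 / b * (b / 2 * x) := by field_simp
    have h4 : 0 ≤ b / 2 * x := by positivity
    have h5 : 0 < 2 / b := by positivity
    nlinarith
  have h6 : Real.exp (-(b / 2 * x)) = Real.exp (b / 2 * x) * Real.exp (-(b * x)) := by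
    rw [← Real.exp_add]; congr 1; ring
  rw [h6, ← mul_assoc]
  gcongr

lemma integrable_one_add_l1Norm_mul_exp {I : ℕ} {b : ℝ} (hb : 0 < b) :
    Integrable fun z : Fin I → ℝ => (1 + l1Norm z) * Real.exp (-(b * l1Norm z)) := by
  refine ((integrable_exp_neg_mul_l1Norm (I := I) (half_pos hb)).const_mul (1 + 2 / b)).mono'
    (by fun_prop) (ae_of_all _ fun z => ?_)
  have hz := l1Norm_nonneg z
  rw [Real.norm_of_nonneg (by positivity)]
  exact one_add_mul_exp_neg_le hb hz

/-! ### The Gumbel density -/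

lemma gumbelPdf_nonneg (z : ℝ) : 0 ≤ gumbelPdf z := (Real.exp_pos _).le

@[fun_prop]
lemma continuous_gumbelPdf : Continuous gumbelPdf := by
  unfold gumbelPdf; fun_prop

lemma gumbelPdf_le (z : ℝ) :
    gumbelPdf z ≤ Real.exp |Real.eulerMascheroniConstant| * Real.exp (-|z|) := by
  unfold gumbelPdf
  rw [← Real.exp_add]
  set γ := Real.eulerMascheroniConstant
  refine Real.exp_le_exp.2 ?_
  have h1 : |z| ≤ |z + γ| + |γ| := by simpa using abs_sub (z + γ) γ
  suffices h : -(z + γ) - Real.exp (-(z + γ)) ≤ -|z + γ| by linarith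
  rcases le_total 0 (z + γ) with h | h
  · rw [abs_of_nonneg h]; linarith [Real.exp_pos (-(z + γ))]
  · rw [abs_of_nonpos h]
    have h2 := Real.quadratic_le_exp_of_nonneg (x := -(z + γ)) (by linarith)
    nlinarith [sq_nonneg (-(z + γ) - 1)]

lemma integral_gumbelPdf : ∫ z, gumbelPdf z = 1 := by
  have hint : Integrable gumbelPdf := by
    have h := integrable_exp_neg_mul_abs one_pos
    simp only [one_mul] at h
    refine (h.const_mul (Real.exp |Real.eulerMascheroniConstant|)).mono'
      continuous_gumbelPdf.aestronglyMeasurable (ae_of_all _ fun z => ?_)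
    rw [Real.norm_of_nonneg (gumbelPdf_nonneg z)]
    exact gumbelPdf_le z
  have hderiv (x : ℝ) : HasDerivAt
      (fun z => Real.exp (-Real.exp (-(z + Real.eulerMascheroniConstant)))) (gumbelPdf x) x := by
    have h := (hasDerivAt_id x).add_const Real.eulerMascheroniConstant
    refine h.fun_neg.exp.fun_neg.exp.congr_deriv ?_
    simp only [gumbelPdf, id]
    rw [mul_neg_one, neg_neg, ← Real.exp_add]
    congr 1; ring
  have h := integral_of_hasDerivAt_of_tendsto (m := 0) (n := 1) hderiv hint ?_ ?_
  · simpa using h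
  · refine Real.tendsto_exp_neg_atTop_nhds_zero.comp (Real.tendsto_exp_atTop.comp ?_)
    exact tendsto_neg_atBot_atTop.comp (tendsto_atBot_add_const_right _ _ tendsto_id)
  · have h1 : Tendsto (fun z : ℝ => Real.exp (-(z + Real.eulerMascheroniConstant))) atTop (𝓝 0) :=
      Real.tendsto_exp_neg_atTop_nhds_zero.comp (tendsto_atTop_add_const_right _ _ tendsto_id)
    simpa [Function.comp_def] using (Real.continuous_exp.tendsto _).comp h1.neg

lemma mGumbelPdf_eq_sub {I : ℕ} (μ : Fin I → ℝ) (σ : ℝ) (z : Fin I → ℝ) :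
    mGumbelPdf μ σ z = mGumbelPdf 0 σ (z - μ) := by
  simp [mGumbelPdf]

lemma mGumbelPdf_nonneg {I : ℕ} (μ : Fin I → ℝ) {σ : ℝ} (hσ : 0 < σ) (z : Fin I → ℝ) :
    0 ≤ mGumbelPdf μ σ z :=
  Finset.prod_nonneg fun _ _ => mul_nonneg (by positivity) (gumbelPdf_nonneg _)

@[fun_prop]
lemma continuous_mGumbelPdf {I : ℕ} (μ : Fin I → ℝ) (σ : ℝ) : Continuous (mGumbelPdf μ σ) := by
  unfold mGumbelPdf; fun_prop

lemma mGumbelPdf_zero_le {I : ℕ} {σ : ℝ} (hσ : 0 < σ) (z : Fin I → ℝ) :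
    mGumbelPdf 0 σ z ≤
      (1 / σ * Real.exp |Real.eulerMascheroniConstant|) ^ I * Real.exp (-(1 / σ * l1Norm z)) := by
  have h : mGumbelPdf 0 σ z ≤ ∏ i, (1 / σ * Real.exp |Real.eulerMascheroniConstant|) *
      Real.exp (-(1 / σ * |z i|)) := by
    refine Finset.prod_le_prod (fun _ _ => mul_nonneg (by positivity) (gumbelPdf_nonneg _))
      fun i _ => ?_
    rw [mul_assoc]
    refine mul_le_mul_of_nonneg_left ((gumbelPdf_le _).trans_eq ?_) (by positivity)
    rw [Pi.zero_apply, sub_zero, abs_div, abs_of_pos hσ, div_eq_inv_mul, one_div]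
  rw [Finset.prod_mul_distrib, ← exp_neg_mul_l1Norm] at h
  simpa using h

lemma integral_mGumbelPdf_zero {I : ℕ} {σ : ℝ} (hσ : 0 < σ) :
    ∫ z : Fin I → ℝ, mGumbelPdf 0 σ z = 1 := by
  simp only [mGumbelPdf, Pi.zero_apply, sub_zero]
  rw [integral_fintype_prod_volume_eq_pow (fun x : ℝ => 1 / σ * gumbelPdf (x / σ)),
    integral_const_mul, Measure.integral_comp_div, integral_gumbelPdf, abs_of_pos hσ]
  simp [hσ.ne']

/-! ### Smoothing by a Gumbel kernel -/

lemma euclNorm_mul_exp_mul_mGumbelPdf_le {I : ℕ} {τ σ : ℝ} (hσ : 0 < σ)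
    (hτσ : τ * σ ≤ 1 / 2) (u : Fin I → ℝ) :
    euclNorm u * Real.exp (τ * euclNorm u) * mGumbelPdf 0 σ u ≤
      4 * σ * (1 / σ * Real.exp |Real.eulerMascheroniConstant|) ^ I *
        Real.exp (-(1 / (4 * σ) * l1Norm u)) := by
  have hle := euclNorm_le_l1Norm u
  have hnn := euclNorm_nonneg u
  have hN := l1Norm_nonneg u
  set s := l1Norm u
  have h1 : euclNorm u ≤ 4 * σ * Real.exp (1 / (4 * σ) * s) := by
    have h := Real.add_one_le_exp (1 / (4 * σ) * s)
    calc euclNorm u ≤ s := hle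
      _ = 4 * σ * (1 / (4 * σ) * s) := by field_simp
      _ ≤ _ := by gcongr; linarith
  have h2 : Real.exp (τ * euclNorm u) ≤ Real.exp (1 / (2 * σ) * s) := by
    have : τ ≤ 1 / (2 * σ) := by rw [le_div_iff₀ (by positivity)]; linarith
    gcongr
  calc euclNorm u * Real.exp (τ * euclNorm u) * mGumbelPdf 0 σ u
      ≤ (4 * σ * Real.exp (1 / (4 * σ) * s)) * Real.exp (1 / (2 * σ) * s) *
        ((1 / σ * Real.exp |Real.eulerMascheroniConstant|) ^ I * Real.exp (-(1 / σ * s))) := by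
        have := mGumbelPdf_zero_le hσ u
        have h0 := mGumbelPdf_nonneg 0 hσ u
        gcongr
    _ = 4 * σ * (1 / σ * Real.exp |Real.eulerMascheroniConstant|) ^ I *
        (Real.exp (1 / (4 * σ) * s) * Real.exp (1 / (2 * σ) * s) * Real.exp (-(1 / σ * s))) := by
        ring
    _ = _ := by
        rw [← Real.exp_add, ← Real.exp_add]
        congr 2
        field_simp
        ring

lemma integrable_mGumbelPdf_zero {I : ℕ} {σ : ℝ} (hσ : 0 < σ) :
    Integrable (mGumbelPdf (0 : Fin I → ℝ) σ) :=
  Integrable.of_integral_ne_zero (by rw [integral_mGumbelPdf_zero hσ]; exact one_ne_zero)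

lemma mGumbelPdf_zero_le_const {I : ℕ} {σ : ℝ} (hσ : 0 < σ) (z : Fin I → ℝ) :
    mGumbelPdf 0 σ z ≤ (1 / σ * Real.exp |Real.eulerMascheroniConstant|) ^ I := by
  refine (mGumbelPdf_zero_le hσ z).trans (mul_le_of_le_one_right (by positivity) ?_)
  have := l1Norm_nonneg z
  exact Real.exp_le_one_iff.2 (neg_nonpos.2 (by positivity))

/-- Convolving with a Gumbel kernel of small scale moves a smooth density by at most a small
multiple of its envelope. -/
lemma exists_scale_convolution_close {I : ℕ} {f : (Fin I → ℝ) → ℝ} (hfint : Integrable f)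
    {τ : ℝ} (hτ : 0 < τ) {L : (Fin I → ℝ) → ℝ} (hL : ∀ z, 0 ≤ L z)
    (hsmooth : ∀ z h : Fin I → ℝ,
      |f (z + h) - f z| ≤ euclNorm h * L z * Real.exp (τ * euclNorm h))
    {ε : ℝ} (hε : 0 < ε) :
    ∃ σ : ℝ, 0 < σ ∧ ∀ z, |f z - ∫ u, f (z - u) * mGumbelPdf 0 σ u| ≤ ε * L z := by
  set A : ℝ := 4 * (8 * Real.exp |Real.eulerMascheroniConstant|) ^ I with hA
  have hApos : 0 < A := by positivity
  refine ⟨min (1 / (2 * τ)) (ε / A), by positivity, fun z => ?_⟩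
  set σ := min (1 / (2 * τ)) (ε / A)
  have hσ : 0 < σ := by positivity
  have hτσ : τ * σ ≤ 1 / 2 := by
    calc τ * σ ≤ τ * (1 / (2 * τ)) := by gcongr; exact min_le_left _ _
      _ = 1 / 2 := by field_simp
  have hσA : σ * A ≤ ε := (le_div_iff₀ hApos).1 (min_le_right _ _)
  have hK := integrable_mGumbelPdf_zero (I := I) hσ
  have hfK : Integrable fun u => f (z - u) * mGumbelPdf 0 σ u := by
    refine (hfint.comp_sub_left z).mul_bdd
      (c := (1 / σ * Real.exp |Real.eulerMascheroniConstant|) ^ I)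
      (by fun_prop) (ae_of_all _ fun u => ?_)
    rw [Real.norm_of_nonneg (mGumbelPdf_nonneg 0 hσ u)]
    exact mGumbelPdf_zero_le_const hσ u
  have hb : (0 : ℝ) < 1 / (4 * σ) := by positivity
  have henv := ((integrable_exp_neg_mul_l1Norm (I := I) hb).const_mul
    (4 * σ * (1 / σ * Real.exp |Real.eulerMascheroniConstant|) ^ I)).const_mul (L z)
  have heq : f z - ∫ u, f (z - u) * mGumbelPdf 0 σ u =
      ∫ u, (f z - f (z - u)) * mGumbelPdf 0 σ u := by
    simp_rw [sub_mul]
    rw [integral_sub (hK.const_mul _) hfK, integral_const_mul, integral_mGumbelPdf_zero hσ, mul_one]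
  rw [heq, ← Real.norm_eq_abs]
  refine (norm_integral_le_of_norm_le henv (ae_of_all _ fun u => ?_)).trans ?_
  · have h := hsmooth z (-u)
    rw [euclNorm_neg, ← sub_eq_add_neg, abs_sub_comm] at h
    have h0 := mGumbelPdf_nonneg 0 hσ u
    rw [norm_mul, Real.norm_of_nonneg h0, Real.norm_eq_abs]
    calc |f z - f (z - u)| * mGumbelPdf 0 σ u
        ≤ euclNorm u * L z * Real.exp (τ * euclNorm u) * mGumbelPdf 0 σ u := by gcongr
      _ = L z * (euclNorm u * Real.exp (τ * euclNorm u) * mGumbelPdf 0 σ u) := by ring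
      _ ≤ _ := mul_le_mul_of_nonneg_left
        (euclNorm_mul_exp_mul_mGumbelPdf_le hσ hτσ u) (hL z)
  · rw [integral_const_mul, integral_const_mul, integral_exp_neg_mul_l1Norm hb, mul_comm]
    refine mul_le_mul_of_nonneg_right (le_trans (le_of_eq ?_) hσA) (hL z)
    rw [hA, mul_assoc, ← mul_pow]
    have : 1 / σ * Real.exp |Real.eulerMascheroniConstant| * (2 / (1 / (4 * σ))) =
      8 * Real.exp |Real.eulerMascheroniConstant| := by field_simp; ring
    rw [this]
    ring

/-! ### Discretizing a mixture -/

/-- Averages along a simple function are finite convex combinations. -/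
lemma MeasureTheory.SimpleFunc.exists_convex_combination {X Y : Type*} [MeasurableSpace X] (P : Measure X)
    [IsProbabilityMeasure P] (s : SimpleFunc X Y) :
    ∃ (m : ℕ) (ω : Fin m → ℝ) (y : Fin m → Y), 1 ≤ m ∧ (∀ j, 0 ≤ ω j ∧ ω j ≤ 1) ∧
      ∑ j, ω j = 1 ∧ ∀ g : Y → ℝ, ∫ x, g (s x) ∂P = ∑ j, ω j * g (y j) := by
  classical
  let e := s.range.equivFin
  have key (g : Y → ℝ) : ∫ x, g (s x) ∂P =
      ∑ j, P.real (s ⁻¹' {(e.symm j : Y)}) * g (e.symm j) := by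
    have h1 (x : X) : g (s x) = ∑ y ∈ s.range, (s ⁻¹' {y}).indicator (fun _ => g y) x := by
      rw [Finset.sum_eq_single (s x)]
      · simp
      · intro y _ hy
        exact Set.indicator_of_notMem (fun h => hy h.symm) _
      · simp
    simp_rw [h1]
    rw [integral_finsetSum _ fun y _ =>
      (integrable_const (g y)).indicator (s.measurableSet_fiber y)]
    simp_rw [integral_indicator_const _ (s.measurableSet_fiber _), smul_eq_mul]
    rw [e.symm.sum_comp (fun y : s.range => P.real (s ⁻¹' {(y : Y)}) * g y)]
    exact (Finset.sum_coe_sort s.range fun y => P.real (s ⁻¹' {y}) * g y).symm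
  have hone : ∑ j, P.real (s ⁻¹' {(e.symm j : Y)}) = 1 := by
    have := key fun _ => 1
    simpa using this.symm
  refine ⟨s.range.card, fun j => P.real (s ⁻¹' {(e.symm j : Y)}), fun j => e.symm j, ?_,
    fun j => ⟨measureReal_nonneg, measureReal_le_one⟩, hone, key⟩
  by_contra h
  have h0 : s.range.card = 0 := by omega
  have : IsEmpty (Fin s.range.card) := by rw [h0]; infer_instance
  simp at hone

lemma lintegral_weight_mul_translate_le {I : ℕ} {K : (Fin I → ℝ) → ℝ} (hK0 : ∀ z, 0 ≤ K z)
    (y : Fin I → ℝ) :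
    ∫⁻ z, ENNReal.ofReal ((1 + l1Norm z) * K (z - y)) ≤
      ENNReal.ofReal (1 + l1Norm y) * ∫⁻ z, ENNReal.ofReal ((1 + l1Norm z) * K z) := by
  rw [← lintegral_const_mul' _ _ ENNReal.ofReal_ne_top,
    ← lintegral_sub_right_eq_self
      (fun z => ENNReal.ofReal (1 + l1Norm y) * ENNReal.ofReal ((1 + l1Norm z) * K z)) y]
  refine lintegral_mono fun z => ?_
  have hy := l1Norm_nonneg y
  have hz := l1Norm_nonneg (z - y)
  have h : l1Norm z ≤ l1Norm (z - y) + l1Norm y := by simpa using l1Norm_add_le (z - y) y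
  rw [← ENNReal.ofReal_mul (by positivity), ← mul_assoc]
  refine ENNReal.ofReal_le_ofReal (mul_le_mul_of_nonneg_right ?_ (hK0 _))
  nlinarith

lemma translate_le_of_le_exp {I : ℕ} {K : (Fin I → ℝ) → ℝ} {c b R : ℝ} (hc : 0 ≤ c) (hb : 0 < b)
    (hK : ∀ z, K z ≤ c * Real.exp (-(b * l1Norm z))) {y : Fin I → ℝ} (hy : l1Norm y ≤ R)
    (z : Fin I → ℝ) :
    K (z - y) ≤ c * Real.exp (b * R) * Real.exp (-(b * l1Norm z)) := by
  refine (hK _).trans ?_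
  rw [mul_assoc, ← Real.exp_add]
  have h : l1Norm z ≤ l1Norm (z - y) + l1Norm y := by simpa using l1Norm_add_le (z - y) y
  gcongr
  nlinarith

/-- Translation is continuous in the weighted `L¹` distance, for kernels with exponential decay. -/
lemma tendsto_lintegral_weight_mul_translate_sub {I : ℕ} {K : (Fin I → ℝ) → ℝ} {c b : ℝ}
    (hKc : Continuous K) (hK0 : ∀ z, 0 ≤ K z) (hc : 0 ≤ c) (hb : 0 < b)
    (hK : ∀ z, K z ≤ c * Real.exp (-(b * l1Norm z)))
    {y : ℕ → Fin I → ℝ} {x : Fin I → ℝ} (hy : Tendsto y atTop (𝓝 x)) :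
    Tendsto (fun n => ∫⁻ z, ENNReal.ofReal ((1 + l1Norm z) * |K (z - x) - K (z - y n)|))
      atTop (𝓝 0) := by
  obtain ⟨R, hR⟩ := ((continuous_l1Norm.tendsto x).comp hy).bddAbove_range
  have hyR (n : ℕ) : l1Norm (y n) ≤ R := hR ⟨n, rfl⟩
  have hxR : l1Norm x ≤ R := le_of_tendsto' ((continuous_l1Norm.tendsto x).comp hy) hyR
  have hlim := tendsto_lintegral_of_dominated_convergence
    (μ := (volume : Measure (Fin I → ℝ))) (f := fun _ => 0)
    (F := fun n z => ENNReal.ofReal ((1 + l1Norm z) * |K (z - x) - K (z - y n)|))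
    (fun z => ENNReal.ofReal
      (c * Real.exp (b * R) * ((1 + l1Norm z) * Real.exp (-(b * l1Norm z)))))
    (fun n => by fun_prop)
    (fun n => ae_of_all _ fun z => ?_)
    ((integrable_one_add_l1Norm_mul_exp hb).const_mul _).lintegral_lt_top.ne
    (ae_of_all _ fun z => ?_)
  · simpa using hlim
  · refine ENNReal.ofReal_le_ofReal ?_
    have hz := l1Norm_nonneg z
    have h1 := translate_le_of_le_exp hc hb hK hxR z
    have h2 := translate_le_of_le_exp hc hb hK (hyR n) z
    have h3 : |K (z - x) - K (z - y n)| ≤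
        c * Real.exp (b * R) * Real.exp (-(b * l1Norm z)) :=
      abs_sub_le_of_nonneg_of_le (hK0 _) h1 (hK0 _) h2
    calc _ ≤ (1 + l1Norm z) * (c * Real.exp (b * R) * Real.exp (-(b * l1Norm z))) := by gcongr
      _ = _ := by ring
  · have hcont : Continuous fun v : Fin I → ℝ =>
        ENNReal.ofReal ((1 + l1Norm z) * |K (z - x) - K (z - v)|) :=
      ENNReal.continuous_ofReal.comp (by fun_prop)
    simpa [Function.comp_def] using (hcont.tendsto x).comp hy

/-- A location mixture of a continuous kernel with exponential decay, over a mixing distribution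
with finite first moment, is approximated by finite mixtures in the weighted `L¹` distance. -/
lemma exists_finite_mixture_close {I : ℕ} {K : (Fin I → ℝ) → ℝ} {c b : ℝ}
    (hKc : Continuous K) (hK0 : ∀ z, 0 ≤ K z) (hc : 0 ≤ c) (hb : 0 < b)
    (hK : ∀ z, K z ≤ c * Real.exp (-(b * l1Norm z)))
    (P : Measure (Fin I → ℝ)) [IsProbabilityMeasure P]
    (hP : ∫⁻ x, ENNReal.ofReal (1 + l1Norm x) ∂P ≠ ⊤) {ε : ENNReal} (hε : 0 < ε) :
    ∃ (m : ℕ) (ω : Fin m → ℝ) (μ : Fin m → Fin I → ℝ),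
      1 ≤ m ∧ (∀ j, 0 ≤ ω j ∧ ω j ≤ 1) ∧ ∑ j, ω j = 1 ∧
      ∫⁻ z, ENNReal.ofReal ((1 + l1Norm z) * |∫ x, K (z - x) ∂P - ∑ j, ω j * K (z - μ j)|) < ε := by
  let s (n : ℕ) : SimpleFunc (Fin I → ℝ) (Fin I → ℝ) :=
    SimpleFunc.approxOn id measurable_id Set.univ 0 (Set.mem_univ 0) n
  have hs (x : Fin I → ℝ) : Tendsto (fun n => s n x) atTop (𝓝 x) :=
    SimpleFunc.tendsto_approxOn measurable_id (Set.mem_univ 0) (by simp)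
  have hsN (n : ℕ) (x : Fin I → ℝ) : 1 + l1Norm (s n x) ≤ (1 + 2 * I) * (1 + l1Norm x) := by
    have h1 : ‖s n x‖ ≤ ‖x‖ + ‖x‖ :=
      SimpleFunc.norm_approxOn_zero_le measurable_id (Set.mem_univ 0) x n
    have h2 := l1Norm_le_card_mul_norm (s n x)
    have h3 := norm_le_l1Norm x
    have h4 : (I : ℝ) * ‖s n x‖ ≤ I * (2 * l1Norm x) := by gcongr; linarith
    have h5 : (0 : ℝ) ≤ I := by positivity
    nlinarith [l1Norm_nonneg x]
  have hKm : Measurable K := hKc.measurable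
  set A := ∫⁻ z, ENNReal.ofReal ((1 + l1Norm z) * K z)
  have hAtop : A ≠ ⊤ := by
    refine ne_top_of_le_ne_top
      ((integrable_one_add_l1Norm_mul_exp (I := I) hb).const_mul c).lintegral_lt_top.ne
      (lintegral_mono fun z => ENNReal.ofReal_le_ofReal ?_)
    have hz := l1Norm_nonneg z
    calc (1 + l1Norm z) * K z ≤ (1 + l1Norm z) * (c * Real.exp (-(b * l1Norm z))) := by
          gcongr; exact hK z
      _ = _ := by ring
  let G (n : ℕ) (x : Fin I → ℝ) : ENNReal :=
    ∫⁻ z, ENNReal.ofReal ((1 + l1Norm z) * |K (z - x) - K (z - s n x)|)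
  have hjoint (n : ℕ) : Measurable fun p : (Fin I → ℝ) × (Fin I → ℝ) =>
      ENNReal.ofReal ((1 + l1Norm p.2) * |K (p.2 - p.1) - K (p.2 - s n p.1)|) := by
    have h1 : Measurable fun p : (Fin I → ℝ) × (Fin I → ℝ) => s n p.1 :=
      (s n).measurable.comp measurable_fst
    have h2 : Measurable fun p : (Fin I → ℝ) × (Fin I → ℝ) => K (p.2 - s n p.1) :=
      hKm.comp (measurable_snd.sub h1)
    fun_prop
  have hGle (n : ℕ) (x : Fin I → ℝ) :
      G n x ≤ ENNReal.ofReal (1 + 2 * I + 1) * A * ENNReal.ofReal (1 + l1Norm x) := by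
    have hx := l1Norm_nonneg x
    have hsx := l1Norm_nonneg (s n x)
    calc G n x ≤ ∫⁻ z, (ENNReal.ofReal ((1 + l1Norm z) * K (z - x)) +
          ENNReal.ofReal ((1 + l1Norm z) * K (z - s n x))) := by
          refine lintegral_mono fun z => ?_
          have hz := l1Norm_nonneg z
          rw [← ENNReal.ofReal_add (mul_nonneg (by positivity) (hK0 _))
            (mul_nonneg (by positivity) (hK0 _)), ← mul_add]
          refine ENNReal.ofReal_le_ofReal (mul_le_mul_of_nonneg_left ?_ (by positivity))
          exact (abs_sub _ _).trans_eq (by rw [abs_of_nonneg (hK0 _), abs_of_nonneg (hK0 _)])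
      _ = (∫⁻ z, ENNReal.ofReal ((1 + l1Norm z) * K (z - x))) +
          ∫⁻ z, ENNReal.ofReal ((1 + l1Norm z) * K (z - s n x)) :=
          lintegral_add_left (by fun_prop) _
      _ ≤ ENNReal.ofReal (1 + l1Norm x) * A + ENNReal.ofReal (1 + l1Norm (s n x)) * A :=
          add_le_add (lintegral_weight_mul_translate_le hK0 x)
            (lintegral_weight_mul_translate_le hK0 (s n x))
      _ ≤ ENNReal.ofReal ((1 + 2 * I + 1) * (1 + l1Norm x)) * A := by
          rw [← add_mul, ← ENNReal.ofReal_add (by positivity) (by positivity)]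
          gcongr
          linarith [hsN n x]
      _ = _ := by rw [ENNReal.ofReal_mul (by positivity)]; ring
  have hlim : Tendsto (fun n => ∫⁻ x, G n x ∂P) atTop (𝓝 0) := by
    have h := tendsto_lintegral_of_dominated_convergence (μ := P) (F := G) (f := fun _ => 0)
      (fun x => ENNReal.ofReal (1 + 2 * I + 1) * A * ENNReal.ofReal (1 + l1Norm x))
      (fun n => (hjoint n).lintegral_prod_right') (fun n => ae_of_all _ (hGle n)) ?_
      (ae_of_all _ fun x => tendsto_lintegral_weight_mul_translate_sub hKc hK0 hc hb hK (hs x))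
    · simpa using h
    · have hC : ENNReal.ofReal (1 + 2 * I + 1) * A ≠ ⊤ :=
        ENNReal.mul_ne_top ENNReal.ofReal_ne_top hAtop
      rw [lintegral_const_mul' _ _ hC]
      exact ENNReal.mul_ne_top hC hP
  obtain ⟨n, hn⟩ := (hlim.eventually_lt_const hε).exists
  obtain ⟨m, ω, μ, hm, hω, hsum, hmix⟩ := SimpleFunc.exists_convex_combination P (s n)
  refine ⟨m, ω, μ, hm, hω, hsum, lt_of_le_of_lt ?_ hn⟩
  have hint {z : Fin I → ℝ} {g : (Fin I → ℝ) → Fin I → ℝ} (hg : Measurable g) :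
      Integrable (fun x => K (z - g x)) P := by
    refine Integrable.of_bound (hKm.comp (measurable_const.sub hg)).aestronglyMeasurable c
      (ae_of_all _ fun x => ?_)
    rw [Real.norm_of_nonneg (hK0 _)]
    have := l1Norm_nonneg (z - g x)
    exact (hK _).trans (mul_le_of_le_one_right hc
      (Real.exp_le_one_iff.2 (neg_nonpos.2 (by positivity))))
  rw [lintegral_lintegral_swap (hjoint n).aemeasurable]
  refine lintegral_mono fun z => ?_
  have hz := l1Norm_nonneg z
  have hsub : ∫ x, K (z - x) ∂P - ∑ j, ω j * K (z - μ j) =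
      ∫ x, (K (z - x) - K (z - s n x)) ∂P := by
    rw [← hmix fun y => K (z - y)]
    exact (integral_sub (hint measurable_id) (hint (s n).measurable)).symm
  dsimp only
  rw [hsub]
  simp_rw [ENNReal.ofReal_mul (show 0 ≤ 1 + l1Norm z by positivity)]
  rw [lintegral_const_mul' _ _ ENNReal.ofReal_ne_top]
  gcongr
  simpa only [← Real.norm_eq_abs, ofReal_norm] using
    enorm_integral_le_lintegral_enorm fun x => K (z - x) - K (z - s n x)

/-- Densities satisfying smoothness and moment conditions can be approximated arbitrarily
well by finite location-scale mixtures of Gumbels (with a common scale) in the distance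
`ρ(f,g) = ∫ (1 + Σ_i |z_i|)|f(z) − g(z)| dz`. -/
theorem approx_by_gumbel_mixtures
    (I : ℕ) (hI : 1 ≤ I)
    (f : (Fin I → ℝ) → ℝ)
    (hfmeas : Measurable f) (hfnonneg : ∀ z, 0 ≤ f z)
    (hfint : Integrable f) (hfprob : ∫ z, f z = 1)
    -- moment existence condition
    (hfmom : Integrable fun z : Fin I → ℝ => euclNorm z * f z)
    -- smoothness condition with envelope `L`
    (τ : ℝ) (hτ : 0 < τ) (L : (Fin I → ℝ) → ℝ) (hLnonneg : ∀ z, 0 ≤ L z)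
    (hsmooth : ∀ z h : Fin I → ℝ,
      |f (z + h) - f z| ≤ euclNorm h * L z * Real.exp (τ * euclNorm h))
    (hLint : ∀ i : Fin I, Integrable fun z : Fin I → ℝ => (1 + |z i|) * L z) :
    ∀ δ : ℝ, 0 < δ →
      ∃ (m : ℕ) (ω : Fin m → ℝ) (μ : Fin m → Fin I → ℝ) (σ : ℝ),
        1 ≤ m ∧ (∀ j, 0 ≤ ω j ∧ ω j ≤ 1) ∧ (∑ j, ω j = 1) ∧ 0 < σ ∧
        Integrable (fun z : Fin I → ℝ =>
          (1 + ∑ i, |z i|) * |f z - ∑ j, ω j * mGumbelPdf (μ j) σ z|) ∧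
        (∫ z : Fin I → ℝ, (1 + ∑ i, |z i|) * |f z - ∑ j, ω j * mGumbelPdf (μ j) σ z|) < δ := by
  intro δ hδ
  set E : ℝ := ∑ i, ∫ z : Fin I → ℝ, (1 + |z i|) * L z with hE
  have hE0 : 0 ≤ E := Finset.sum_nonneg fun i _ => integral_nonneg fun z =>
    mul_nonneg (by positivity) (hLnonneg z)
  obtain ⟨σ, hσ, hclose⟩ := exists_scale_convolution_close hfint hτ hLnonneg hsmooth
    (ε := δ / 2 / (E + 1)) (by positivity)
  set ε := δ / 2 / (E + 1) with hεdef
  have hε : 0 < ε := by positivity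
  have hεE : ε * E < δ / 2 := by
    rw [hεdef, div_mul_eq_mul_div, div_lt_iff₀ (by positivity)]
    nlinarith
  set K : (Fin I → ℝ) → ℝ := mGumbelPdf 0 σ
  let P : Measure (Fin I → ℝ) := volume.withDensity fun z => ENNReal.ofReal (f z)
  have hfE : Measurable fun z => ENNReal.ofReal (f z) := hfmeas.ennreal_ofReal
  have hPprob : IsProbabilityMeasure P := ⟨by
    rw [withDensity_apply _ MeasurableSet.univ, Measure.restrict_univ,
      ← ofReal_integral_eq_lintegral_ofReal hfint (ae_of_all _ hfnonneg), hfprob,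
      ENNReal.ofReal_one]⟩
  have hPmom : ∫⁻ x, ENNReal.ofReal (1 + l1Norm x) ∂P ≠ ⊤ := by
    rw [lintegral_withDensity_eq_lintegral_mul _ hfE (by fun_prop)]
    refine ne_top_of_le_ne_top (hfint.add (hfmom.const_mul I)).lintegral_lt_top.ne
      (lintegral_mono fun z => ?_)
    rw [Pi.mul_apply, ← ENNReal.ofReal_mul (hfnonneg z)]
    refine ENNReal.ofReal_le_ofReal ?_
    simp only [Pi.add_apply]
    nlinarith [mul_le_mul_of_nonneg_left (l1Norm_le_card_mul_euclNorm z) (hfnonneg z)]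
  have hconv (z : Fin I → ℝ) : ∫ x, K (z - x) ∂P = ∫ u, f (z - u) * K u := by
    rw [integral_withDensity_eq_integral_toReal_smul hfE
      (ae_of_all _ fun _ => ENNReal.ofReal_lt_top),
      ← integral_sub_left_eq_self (fun u => f (z - u) * K u) volume z]
    simp [ENNReal.toReal_ofReal (hfnonneg _)]
  obtain ⟨m, ω, μ, hm, hω, hsum, hmix⟩ := exists_finite_mixture_close
    (continuous_mGumbelPdf 0 σ) (mGumbelPdf_nonneg 0 hσ)
    (by positivity) (by positivity) (mGumbelPdf_zero_le hσ) P hPmom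
    (ε := ENNReal.ofReal (δ / 2)) (by simpa using hδ)
  refine ⟨m, ω, μ, σ, hm, hω, hsum, hσ, ?_⟩
  simp_rw [mGumbelPdf_eq_sub (μ _)]
  set F : (Fin I → ℝ) → ℝ := fun z =>
    (1 + l1Norm z) * |f z - ∑ j, ω j * K (z - μ j)|
  have hFmeas : Measurable F := by
    have : Measurable K := (continuous_mGumbelPdf 0 σ).measurable
    fun_prop
  have hF0 (z : Fin I → ℝ) : 0 ≤ F z :=
    mul_nonneg (add_nonneg zero_le_one (l1Norm_nonneg z)) (abs_nonneg _)
  have henv : Integrable fun z : Fin I → ℝ => ε * ∑ i, (1 + |z i|) * L z :=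
    (integrable_finsetSum _ fun i _ => hLint i).const_mul ε
  have henv0 (z : Fin I → ℝ) : 0 ≤ ε * ∑ i, (1 + |z i|) * L z :=
    mul_nonneg hε.le (Finset.sum_nonneg fun i _ => mul_nonneg (by positivity) (hLnonneg z))
  have hFle (z : Fin I → ℝ) : ENNReal.ofReal (F z) ≤
      ENNReal.ofReal (ε * ∑ i, (1 + |z i|) * L z) + ENNReal.ofReal
        ((1 + l1Norm z) * |∫ x, K (z - x) ∂P - ∑ j, ω j * K (z - μ j)|) := by
    have hz := l1Norm_nonneg z
    rw [← ENNReal.ofReal_add (henv0 z) (by positivity)]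
    refine ENNReal.ofReal_le_ofReal ?_
    have h1 : |f z - ∫ x, K (z - x) ∂P| ≤ ε * L z := by rw [hconv]; exact hclose z
    have h2 : (1 + l1Norm z) * (ε * L z) ≤ ε * ∑ i, (1 + |z i|) * L z := by
      have h3 : 1 + l1Norm z ≤ ∑ i, (1 + |z i|) := by
        rw [Finset.sum_add_distrib]
        simpa [l1Norm] using hI
      rw [← Finset.sum_mul]
      nlinarith [mul_le_mul_of_nonneg_right h3 (mul_nonneg hε.le (hLnonneg z))]
    calc F z ≤ (1 + l1Norm z) * (|f z - ∫ x, K (z - x) ∂P| +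
          |∫ x, K (z - x) ∂P - ∑ j, ω j * K (z - μ j)|) :=
          mul_le_mul_of_nonneg_left (abs_sub_le _ _ _) (by positivity)
      _ ≤ (1 + l1Norm z) * (ε * L z) +
          (1 + l1Norm z) * |∫ x, K (z - x) ∂P - ∑ j, ω j * K (z - μ j)| := by
          rw [mul_add]; gcongr
      _ ≤ _ := add_le_add h2 le_rfl
  have hFlt : ∫⁻ z, ENNReal.ofReal (F z) < ENNReal.ofReal δ := by
    refine (lintegral_mono hFle).trans_lt ?_
    rw [lintegral_add_left' henv.aemeasurable.ennreal_ofReal,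
      ← ofReal_integral_eq_lintegral_ofReal henv (ae_of_all _ henv0), integral_const_mul,
      integral_finsetSum _ fun i _ => hLint i, ← hE, ← add_halves δ,
      ENNReal.ofReal_add (by positivity) (by positivity)]
    exact ENNReal.add_lt_add ((ENNReal.ofReal_lt_ofReal_iff (by positivity)).2 hεE)
      (by simpa using hmix)
  have hFint : Integrable F := by
    refine ⟨hFmeas.aestronglyMeasurable, ?_⟩
    rw [hasFiniteIntegral_iff_ofReal (ae_of_all _ hF0)]
    exact hFlt.trans ENNReal.ofReal_lt_top
  refine ⟨hFint, ?_⟩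
  rw [← ofReal_integral_eq_lintegral_ofReal hFint (ae_of_all _ hF0)] at hFlt
  exact (ENNReal.ofReal_lt_ofReal_iff hδ).1 hFlt
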